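/- arXiv:2311.01121 — 2 statements merged into one kernel-verified Lean document; each statement's English description precedes it below -/
import Mathlib

section
/- Let a, b > 0, let E := {(u,v) ∈ ℝ² : u²/a² + v²/b² ≤ 1} be a solid ellipse, and let n ≥ 3 be an integer. Then the maximal area of a convex polygon with at most n vertices inscribed in E is sup{ Area(convexHull(S)) : S ⊆ ∂E, S finite, |S| ≤ n } = (n/2)·a·b·sin(2π/n); consequently δ_i(n) := Area(E) − this supremum equals π·a·b − (n/2)·a·b·sin(2π/n). -/
open MeasureTheory

/-!
Adjoining to a strictly convex polygon a vertex `q` beyond its edge `uv` adds exactly the triangle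
`uvq`, so induction on the number of vertices gives the shoelace formula. For points of the ellipse
with increasing eccentric angles `θ₀ < ⋯ < θₘ < θ₀ + 2π` it reads
`area = (ab / 2) ∑ sin (θᵢ₊₁ - θᵢ)`. After adding `2π` to the closing gap, the gaps are nonnegative
and sum to `2π`, so Jensen's inequality for the concave sine bounds the sum by `n sin (2π / n)`,
with equality for equally spaced angles.
-/

section ConvexHull

open Set

variable {E : Type*} [AddCommGroup E] [Module ℝ E]

lemma exists_mem_segment_map_eq (f : E →ₗ[ℝ] ℝ) {c : ℝ} {x y : E} (hx : f x ≤ c) (hy : c ≤ f y) :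
    ∃ z ∈ segment ℝ x y, f z = c := by
  have : c ∈ f.toAffineMap '' segment ℝ x y := by
    rw [image_segment]
    exact (segment_eq_Icc (hx.trans hy)).symm ▸ ⟨hx, hy⟩
  exact this

theorem convexHull_insert_eq_union (f : E →ₗ[ℝ] ℝ) {c : ℝ} {P : Set E} {q u v : E}
    (hu : u ∈ P) (hv : v ∈ P) (hP : ∀ x ∈ P, f x ≤ c) (hq : c ≤ f q)
    (hcut : ∀ z ∈ convexHull ℝ (insert q P), f z = c → z ∈ segment ℝ u v) :
    convexHull ℝ (insert q P) = convexHull ℝ P ∪ convexHull ℝ {u, v, q} := by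
  refine Subset.antisymm (fun x hx => ?_)
    (union_subset (convexHull_mono (by grind)) (convexHull_mono (by grind)))
  obtain ⟨y, hy, hxy⟩ : ∃ y ∈ convexHull ℝ P, x ∈ segment ℝ q y := by
    simpa [convexHull_insert ⟨u, hu⟩] using hx
  have hchord {s : Set E} (hs : {u, v} ⊆ s) : segment ℝ u v ⊆ convexHull ℝ s :=
    convexHull_pair (𝕜 := ℝ) u v ▸ convexHull_mono hs
  have hqhull : q ∈ convexHull ℝ (insert q P) := subset_convexHull ℝ _ (mem_insert q P)
  have hyhull : y ∈ convexHull ℝ (insert q P) := convexHull_mono (subset_insert q P) hy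
  have hyc : f y ≤ c := convexHull_min hP (convex_halfSpace_le f.isLinear c) hy
  -- A segment from `q` to the old hull can cross `f = c` only on `[u, v]`, which belongs to both
  -- parts of the union.
  rcases le_total (f x) c with hxc | hxc
  · left
    obtain ⟨z, hz, hfz⟩ := exists_mem_segment_map_eq f hxc hq
    have hzP : z ∈ convexHull ℝ P := hchord (by grind)
      (hcut z ((convex_convexHull ℝ _).segment_subset hx hqhull hz) hfz)
    rw [segment_symm] at hxy
    rw [mem_segment_iff_wbtw] at hxy hz
    exact (convex_convexHull ℝ P).segment_subset hy hzP
      (mem_segment_iff_wbtw.2 (hxy.trans_right_left hz))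
  · right
    obtain ⟨z, hz, hfz⟩ := exists_mem_segment_map_eq f hyc hxc
    have hztri : z ∈ convexHull ℝ {u, v, q} := hchord (by grind)
      (hcut z ((convex_convexHull ℝ _).segment_subset hyhull hx hz) hfz)
    rw [segment_symm] at hz
    rw [mem_segment_iff_wbtw] at hxy hz
    exact (convex_convexHull ℝ _).segment_subset (subset_convexHull ℝ _ (by grind)) hztri
      (mem_segment_iff_wbtw.2 (hxy.trans_right_left hz))

end ConvexHull

section HaarMeasure

open Set

variable {E : Type*} [NormedAddCommGroup E] [NormedSpace ℝ E] [MeasurableSpace E] [BorelSpace E]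
  [FiniteDimensional ℝ E] (μ : Measure E) [μ.IsAddHaarMeasure]

lemma addHaar_setOf_map_eq {f : E →ₗ[ℝ] ℝ} (hf : f ≠ 0) (c : ℝ) : μ {x | f x = c} = 0 := by
  have h : ∀ᵐ x ∂μ, f x ∈ ({c}ᶜ : Set ℝ) :=
    (ae_comp_linearMap_mem_iff f μ volume (f.surjective hf) (measurableSet_singleton c).compl).2
      (compl_mem_ae_iff.2 (measure_singleton c))
  simpa [ae_iff] using h

theorem addHaar_real_convexHull_insert {f : E →ₗ[ℝ] ℝ} (hf : f ≠ 0) {c : ℝ} {P : Set E}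
    (hPfin : P.Finite) {q u v : E} (hu : u ∈ P) (hv : v ∈ P) (hfu : f u = c) (hfv : f v = c)
    (hP : ∀ x ∈ P, f x ≤ c) (hq : c ≤ f q)
    (hcut : ∀ z ∈ convexHull ℝ (insert q P), f z = c → z ∈ segment ℝ u v) :
    μ.real (convexHull ℝ (insert q P)) =
      μ.real (convexHull ℝ P) + μ.real (convexHull ℝ {u, v, q}) := by
  have hle : ∀ x ∈ convexHull ℝ P, f x ≤ c :=
    convexHull_min hP (convex_halfSpace_le f.isLinear c)
  have hvertices : ∀ x ∈ ({u, v, q} : Set E), c ≤ f x := by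
    rintro x (rfl | rfl | rfl)
    exacts [hfu.ge, hfv.ge, hq]
  have hge : ∀ x ∈ convexHull ℝ {u, v, q}, c ≤ f x :=
    convexHull_min hvertices (convex_halfSpace_ge f.isLinear c)
  have htri : IsCompact (convexHull ℝ {u, v, q}) :=
    Set.Finite.isCompact_convexHull ℝ (toFinite {u, v, q})
  rw [convexHull_insert_eq_union f hu hv hP hq hcut]
  refine measureReal_union₀ htri.measurableSet.nullMeasurableSet ?_
    (Set.Finite.isCompact_convexHull ℝ hPfin).measure_ne_top htri.measure_ne_top
  exact measure_mono_null (fun x hx => (hle x hx.1).antisymm (hge x hx.2))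
    (addHaar_setOf_map_eq μ hf c)

end HaarMeasure

section PlaneArea

open Set

/-- The determinant `p₁q₂ - p₂q₁` of two vectors of the plane, as a bilinear form. -/
def det₂ : ℝ × ℝ →ₗ[ℝ] ℝ × ℝ →ₗ[ℝ] ℝ :=
  LinearMap.mk₂ ℝ (fun p q => p.1 * q.2 - p.2 * q.1)
    (fun p p' q => by simp only [Prod.fst_add, Prod.snd_add]; ring)
    (fun c p q => by simp only [Prod.smul_fst, Prod.smul_snd, smul_eq_mul]; ring)
    (fun p q q' => by simp only [Prod.fst_add, Prod.snd_add]; ring)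
    (fun c p q => by simp only [Prod.smul_fst, Prod.smul_snd, smul_eq_mul]; ring)

lemma det₂_apply (p q : ℝ × ℝ) : det₂ p q = p.1 * q.2 - p.2 * q.1 := rfl

/-- Twice the signed area of the triangle `u v w`, positive if it is traversed counterclockwise. -/
def orient (u v w : ℝ × ℝ) : ℝ := det₂ (v - u) (w - u)

lemma orient_eq_det₂_add (u v w : ℝ × ℝ) :
    orient u v w = det₂ u v + det₂ v w + det₂ w u := by
  simp only [orient, det₂_apply, Prod.fst_sub, Prod.snd_sub]
  ring

lemma orient_rotate (u v w : ℝ × ℝ) : orient u v w = orient v w u := by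
  simp only [orient_eq_det₂_add]
  ring

lemma orient_swap (u v w : ℝ × ℝ) : orient u v w = -orient u w v := by
  simp only [orient_eq_det₂_add, det₂_apply]
  ring

lemma orient_self_left (u w : ℝ × ℝ) : orient u u w = 0 := by
  simp [orient]

lemma convex_setOf_orient_nonneg (u v : ℝ × ℝ) : Convex ℝ {x | 0 ≤ orient u v x} := by
  simpa only [orient, map_sub, sub_nonneg] using
    convex_halfSpace_ge (det₂ (v - u)).isLinear (det₂ (v - u) u)

/-- The linear map of the plane that sends the standard basis to `v, w`. -/
def ofColumns (v w : ℝ × ℝ) : ℝ × ℝ →ₗ[ℝ] ℝ × ℝ :=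
  (LinearMap.fst ℝ ℝ ℝ).smulRight v + (LinearMap.snd ℝ ℝ ℝ).smulRight w

lemma ofColumns_apply (v w x : ℝ × ℝ) : ofColumns v w x = x.1 • v + x.2 • w := rfl

lemma det_ofColumns (v w : ℝ × ℝ) : LinearMap.det (ofColumns v w) = det₂ v w := by
  rw [← LinearMap.det_toMatrix (Module.Basis.finTwoProd ℝ), Matrix.det_fin_two]
  simp [LinearMap.toMatrix_apply, ofColumns_apply, det₂_apply, mul_comm]

/-- The reference triangle, of which every triangle is an affine image. -/
def unitTriangle : Set (ℝ × ℝ) := convexHull ℝ {(0, 0), (1, 0), (0, 1)}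

lemma unitTriangle_eq : unitTriangle = {x : ℝ × ℝ | 0 ≤ x.1 ∧ 0 ≤ x.2 ∧ x.1 + x.2 ≤ 1} := by
  refine Subset.antisymm (convexHull_min ?_ ?_) ?_
  · rintro x (rfl | rfl | rfl) <;> norm_num
  · rintro x ⟨hx₁, hx₂, hx⟩ y ⟨hy₁, hy₂, hy⟩ s t hs ht hst
    simp only [mem_ofPred_eq, Prod.fst_add, Prod.snd_add, Prod.smul_fst, Prod.smul_snd, smul_eq_mul]
    exact ⟨by positivity, by positivity, by nlinarith⟩
  · rintro x ⟨hx₁, hx₂, hx⟩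
    have hweights : ∀ i, 0 ≤ ![1 - x.1 - x.2, x.1, x.2] i := by
      intro i
      fin_cases i
      exacts [by simpa [sub_sub] using hx, hx₁, hx₂]
    have hvertices : ∀ i, ![((0 : ℝ), (0 : ℝ)), (1, 0), (0, 1)] i ∈ unitTriangle :=
      fun i => subset_convexHull ℝ _ (by fin_cases i <;> simp)
    have hsum : ∑ i, ![1 - x.1 - x.2, x.1, x.2] i = 1 := by
      rw [Fin.sum_univ_three]
      exact (by ring : 1 - x.1 - x.2 + x.1 + x.2 = 1)
    simpa [Fin.sum_univ_three, unitTriangle] using (convex_convexHull ℝ _).sum_mem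
      (fun i _ => hweights i) hsum (fun i _ => hvertices i)

lemma volume_real_unitTriangle : volume.real unitTriangle = 1 / 2 := by
  have hmeas : MeasurableSet unitTriangle :=
    (Set.Finite.isCompact_convexHull ℝ (toFinite _)).measurableSet
  have hslice (x : ℝ) : volume (Prod.mk x ⁻¹' unitTriangle) =
      (Icc 0 1).indicator (fun x => ENNReal.ofReal (1 - x)) x := by
    by_cases hx : x ∈ Icc (0 : ℝ) 1
    · have : Prod.mk x ⁻¹' unitTriangle = Icc 0 (1 - x) := by
        rw [unitTriangle_eq]
        grind
      rw [this, Real.volume_Icc, indicator_of_mem hx, sub_zero]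
    · have : Prod.mk x ⁻¹' unitTriangle = ∅ := by
        rw [unitTriangle_eq]
        grind
      rw [this, measure_empty, indicator_of_notMem hx]
  rw [Measure.real, Measure.volume_eq_prod, Measure.prod_apply hmeas]
  simp_rw [hslice]
  rw [lintegral_indicator measurableSet_Icc, ← integral_eq_lintegral_of_nonneg_ae,
    integral_Icc_eq_integral_Ioc, ← intervalIntegral.integral_of_le zero_le_one]
  · rw [intervalIntegral.integral_sub (by simp) (by simp)]
    norm_num
  · filter_upwards [self_mem_ae_restrict measurableSet_Icc] with x hx using sub_nonneg.2 hx.2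
  · fun_prop

open scoped Pointwise in
theorem volume_real_convexHull_triple (u v w : ℝ × ℝ) :
    volume.real (convexHull ℝ {u, v, w}) = |orient u v w| / 2 := by
  have h : ({u, v, w} : Set (ℝ × ℝ)) =
      u +ᵥ ofColumns (v - u) (w - u) '' {((0 : ℝ), (0 : ℝ)), (1, 0), (0, 1)} := by
    simp [image_insert_eq, ofColumns_apply, ← image_vadd]
  rw [h, convexHull_vadd, ← LinearMap.image_convexHull, Measure.real, measure_vadd,
    Measure.addHaar_image_linearMap, ENNReal.toReal_mul, ENNReal.toReal_ofReal (abs_nonneg _),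
    det_ofColumns, ← Measure.real, ← unitTriangle, volume_real_unitTriangle, orient]
  ring

lemma mem_segment_of_orient {u v q z : ℝ × ℝ} (hq : 0 < orient u v q) (hz : orient u v z = 0)
    (hvq : 0 ≤ orient v q z) (hqu : 0 ≤ orient q u z) : z ∈ segment ℝ u v := by
  have hsum : orient v q z + orient q u z = orient u v q := by
    rw [← add_zero (_ + _), ← hz]
    simp only [orient_eq_det₂_add, det₂_apply]
    ring
  have hne := hq.ne'
  refine ⟨orient v q z / orient u v q, orient q u z / orient u v q, by positivity, by positivity,
    by rw [← add_div, hsum, div_self hne], ?_⟩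
  have : orient v q z • u + orient q u z • v = orient u v q • z := by
    rw [← add_zero (_ + _), ← zero_smul ℝ q, ← hz]
    ext <;>
    · simp only [orient_eq_det₂_add, det₂_apply, Prod.fst_add, Prod.snd_add, Prod.smul_fst,
        Prod.smul_snd, smul_eq_mul]
      ring
  rw [div_eq_inv_mul, div_eq_inv_mul, mul_smul, mul_smul, ← smul_add, this, inv_smul_smul₀ hne]

lemma volume_real_convexHull_insert_of_orient {P : Set (ℝ × ℝ)} (hPfin : P.Finite) {q u v : ℝ × ℝ}
    (hu : u ∈ P) (hv : v ∈ P) (hq : 0 < orient u v q) (hP : ∀ x ∈ P, orient u v x ≤ 0)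
    (hvq : ∀ x ∈ P, 0 ≤ orient v q x) (hqu : ∀ x ∈ P, 0 ≤ orient q u x) :
    volume.real (convexHull ℝ (insert q P)) =
      volume.real (convexHull ℝ P) + orient u v q / 2 := by
  have hhull {a b : ℝ × ℝ} (hab : 0 ≤ orient a b q) (h : ∀ x ∈ P, 0 ≤ orient a b x) :
      ∀ x ∈ convexHull ℝ (insert q P), 0 ≤ orient a b x :=
    convexHull_min (forall_mem_insert.2 ⟨hab, h⟩) (convex_setOf_orient_nonneg a b)
  have hvqq : 0 ≤ orient v q q := by rw [orient_rotate, orient_self_left]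
  have hquq : 0 ≤ orient q u q := by rw [← orient_rotate, orient_self_left]
  rw [addHaar_real_convexHull_insert volume (f := det₂ (v - u)) (c := det₂ (v - u) u) ?_ hPfin
    hu hv rfl ?_ ?_ ?_ ?_, volume_real_convexHull_triple, abs_of_pos hq]
  · intro h
    simp [orient, h] at hq
  · rw [← sub_eq_zero, ← map_sub, det₂_apply]
    ring
  · simpa only [orient, map_sub, sub_nonpos] using hP
  · rw [← sub_nonneg, ← map_sub]
    exact hq.le
  · intro z hz hfz
    exact mem_segment_of_orient hq (by rw [orient, map_sub, hfz, sub_self])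
      (hhull hvqq hvq z hz) (hhull hquq hqu z hz)

/-- The points `p 0, …, p (n - 1)` are, in this order, the vertices of a strictly convex polygon
traversed counterclockwise. The condition is vacuous for `n ≤ 2`. -/
def IsConvexPolygon {n : ℕ} (p : Fin n → ℝ × ℝ) : Prop :=
  ∀ ⦃i j k⦄, i < j → j < k → 0 < orient (p i) (p j) (p k)

lemma IsConvexPolygon.orient_nonneg {n : ℕ} {p : Fin n → ℝ × ℝ} (hp : IsConvexPolygon p)
    {i j k : Fin n} (hij : i ≤ j) (hjk : j ≤ k) : 0 ≤ orient (p i) (p j) (p k) := by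
  rcases hij.eq_or_lt with rfl | hij
  · rw [orient_self_left]
  rcases hjk.eq_or_lt with rfl | hjk
  · rw [orient_rotate, orient_self_left]
  exact (hp hij hjk).le

lemma IsConvexPolygon.init {n : ℕ} {p : Fin (n + 1) → ℝ × ℝ} (hp : IsConvexPolygon p) :
    IsConvexPolygon (Fin.init p) :=
  fun _ _ _ hij hjk => hp (Fin.castSucc_lt_castSucc_iff.2 hij) (Fin.castSucc_lt_castSucc_iff.2 hjk)

lemma sum_det₂_eq_add_orient {m : ℕ} (p : Fin (m + 2) → ℝ × ℝ) :
    ∑ i, det₂ (p i) (p (i + 1)) = ∑ i, det₂ (Fin.init p i) (Fin.init p (i + 1)) +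
      orient (p 0) (p (Fin.last m).castSucc) (p (Fin.last (m + 1))) := by
  simp only [Fin.sum_univ_castSucc, Fin.coeSucc_eq_succ, Fin.last_add_one, Fin.init,
    orient_eq_det₂_add, Fin.succ_castSucc, Fin.succ_last, Fin.castSucc_zero]
  simp only [det₂_apply]
  ring

lemma IsConvexPolygon.volume_real_convexHull_insert_last {m : ℕ} {p : Fin (m + 2) → ℝ × ℝ}
    (hp : IsConvexPolygon p) :
    volume.real (convexHull ℝ (insert (p (Fin.last (m + 1))) (range (Fin.init p)))) =
      volume.real (convexHull ℝ (range (Fin.init p))) +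
        orient (p 0) (p (Fin.last m).castSucc) (p (Fin.last (m + 1))) / 2 := by
  rcases m.eq_zero_or_pos with rfl | hm
  · have hrange : range (Fin.init p) = {p 0} := range_unique
    have hsegment : volume.real (convexHull ℝ {p 1, p 0}) = 0 := by
      simpa [pair_comm, orient_self_left] using volume_real_convexHull_triple (p 0) (p 0) (p 1)
    rw [hrange]
    simpa [Measure.real, orient_self_left] using hsegment
  · refine volume_real_convexHull_insert_of_orient (finite_range _)
      (mem_range_self (0 : Fin (m + 1))) (mem_range_self (Fin.last m))
      (hp hm (Fin.castSucc_lt_last _)) ?_ ?_ ?_ <;>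
      refine forall_mem_range.2 fun i => ?_
    · rw [orient_swap, neg_nonpos]
      exact hp.orient_nonneg (Fin.zero_le _) (Fin.castSucc_le_castSucc_iff.2 i.le_last)
    · rw [← orient_rotate]
      exact hp.orient_nonneg (Fin.castSucc_le_castSucc_iff.2 i.le_last) (Fin.le_last _)
    · rw [orient_rotate]
      exact hp.orient_nonneg (Fin.zero_le _) (Fin.le_last _)

theorem IsConvexPolygon.volume_real_convexHull_range {m : ℕ} {p : Fin (m + 1) → ℝ × ℝ}
    (hp : IsConvexPolygon p) :
    volume.real (convexHull ℝ (range p)) = (∑ i, det₂ (p i) (p (i + 1))) / 2 := by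
  induction m with
  | zero => simp [range_unique, Measure.real, det₂_apply, mul_comm]
  | succ m ih =>
    have hrange : range p = insert (p (Fin.last (m + 1))) (range (Fin.init p)) := by
      rw [← Fin.range_snoc, Fin.snoc_init_self]
    rw [hrange, hp.volume_real_convexHull_insert_last, ih hp.init, sum_det₂_eq_add_orient, add_div]

end PlaneArea

section SineSum

open Real Set

lemma sum_le_mul_map_inv_smul_sum_of_concaveOn {E ι : Type*} [AddCommGroup E] [Module ℝ E]
    {S : Set E} {f : E → ℝ} (hf : ConcaveOn ℝ S f) (h0 : 0 ∈ S) (hf0 : 0 ≤ f 0) {s : Finset ι}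
    {n : ℕ} (hs : s.card ≤ n) {y : ι → E} (hy : ∀ i ∈ s, y i ∈ S) :
    ∑ i ∈ s, f (y i) ≤ n * f ((n : ℝ)⁻¹ • ∑ i ∈ s, y i) := by
  rcases n.eq_zero_or_pos with rfl | hn
  · obtain rfl : s = ∅ := by simpa using hs
    simp
  have hn' : (0 : ℝ) < n := by exact_mod_cast hn
  have hv : 0 ≤ 1 - s.card * (n : ℝ)⁻¹ := by
    rw [sub_nonneg, ← div_eq_mul_inv, div_le_one hn']
    exact_mod_cast hs
  have jensen := hf.map_add_sum_le (t := s) (w := fun _ => (n : ℝ)⁻¹)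
    (fun _ _ => by positivity) (by simp) hy hv h0
  rw [smul_zero, zero_add, ← Finset.smul_sum, ← Finset.smul_sum] at jensen
  rw [← inv_mul_le_iff₀ hn']
  exact (le_add_of_nonneg_left (smul_nonneg hv hf0)).trans jensen

lemma sin_div_le_sin_two_mul_pi_div {r x : ℝ} (hr : 3 ≤ r) (hx₀ : 0 ≤ x) (hx : x ≤ π) :
    sin (x / r) ≤ sin (2 * π / r) := by
  have hr₀ : 0 < r := by linarith
  have hthird : 3 * (π / r) ≤ π := by
    rw [← mul_div_assoc, div_le_iff₀ hr₀]
    nlinarith [pi_pos]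
  have h₀ : 0 ≤ x / r := by positivity
  have h₁ : x / r ≤ π / r := by gcongr
  rw [mul_div_assoc]
  rcases le_total (2 * (π / r)) (π / 2) with h₂ | h₂
  · exact sin_le_sin_of_le_of_le_pi_div_two (by linarith) h₂ (by linarith)
  · rw [← sin_pi_sub (2 * (π / r))]
    exact sin_le_sin_of_le_of_le_pi_div_two (by linarith) (by linarith) (by linarith)

theorem sum_sin_le_of_sum_eq_two_pi {ι : Type*} {s : Finset ι} {n : ℕ} (hn : 3 ≤ n)
    (hs : s.card ≤ n) {x : ι → ℝ} (hx : ∀ i ∈ s, 0 ≤ x i) (hsum : ∑ i ∈ s, x i = 2 * π) :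
    ∑ i ∈ s, sin (x i) ≤ n * sin (2 * π / n) := by
  have hn' : (3 : ℝ) ≤ n := by exact_mod_cast hn
  -- An angle beyond `π` has nonpositive sine, so it may be replaced by `0`.
  let y i := if x i ≤ π then x i else 0
  have hy : ∀ i ∈ s, y i ∈ Icc 0 π := by
    intro i hi
    have := hx i hi
    grind [pi_pos]
  have hsin : ∀ i ∈ s, sin (x i) ≤ sin (y i) := by
    intro i hi
    by_cases h : x i ≤ π
    · simp only [y, h, if_true, le_refl]
    · have hxi : x i ≤ 2 * π := hsum ▸ Finset.single_le_sum hx hi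
      rw [← sin_sub_two_pi, show y i = 0 from if_neg h, sin_zero]
      exact sin_nonpos_of_nonpos_of_neg_pi_le (by linarith) (by linarith)
  have hySum : ∑ i ∈ s, y i = 2 * π ∨ ∑ i ∈ s, y i ≤ π := by
    by_cases hall : ∀ i ∈ s, x i ≤ π
    · exact .inl (hsum ▸ Finset.sum_congr rfl fun i hi => if_pos (hall i hi))
    · push Not at hall
      obtain ⟨j, hj, hxj⟩ := hall
      have hle : x j - y j ≤ ∑ i ∈ s, (x i - y i) :=
        Finset.single_le_sum (f := fun i => x i - y i) (fun i hi => by grind) hj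
      rw [Finset.sum_sub_distrib, hsum] at hle
      exact .inr (by grind)
  have hmono : sin ((n : ℝ)⁻¹ * ∑ i ∈ s, y i) ≤ sin (2 * π / n) := by
    rw [inv_mul_eq_div]
    rcases hySum with h | h
    · rw [h]
    · exact sin_div_le_sin_two_mul_pi_div hn' (Finset.sum_nonneg fun i hi => (hy i hi).1) h
  calc ∑ i ∈ s, sin (x i) ≤ ∑ i ∈ s, sin (y i) := Finset.sum_le_sum hsin
    _ ≤ n * sin ((n : ℝ)⁻¹ * ∑ i ∈ s, y i) :=
      sum_le_mul_map_inv_smul_sum_of_concaveOn strictConcaveOn_sin_Icc.concaveOn ⟨le_rfl, pi_pos.le⟩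
        sin_zero.ge hs hy
    _ ≤ n * sin (2 * π / n) := by gcongr

lemma sum_sin_sub_le_of_monotone {m n : ℕ} (hn : 3 ≤ n) (hm : m + 1 ≤ n) {θ : Fin (m + 1) → ℝ}
    (hθ : Monotone θ) (hlast : θ (Fin.last m) ≤ θ 0 + 2 * π) :
    ∑ i, sin (θ (i + 1) - θ i) ≤ n * sin (2 * π / n) := by
  let gap i := θ (i + 1) - θ i + if i = Fin.last m then 2 * π else 0
  have hgap (i) : 0 ≤ gap i := by
    by_cases hi : i = Fin.last m
    · simp only [gap, hi, Fin.last_add_one, if_true]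
      linarith
    · have : θ i ≤ θ (i + 1) := hθ (Fin.lt_add_one_iff.2 (Fin.lt_last_iff_ne_last.2 hi)).le
      simpa [gap, hi] using this
  have hsum : ∑ i, gap i = 2 * π := by
    have : ∑ i, θ (i + 1) = ∑ i, θ i := Equiv.sum_comp (Equiv.addRight (1 : Fin (m + 1))) θ
    simp [gap, Finset.sum_add_distrib, this]
  calc ∑ i, sin (θ (i + 1) - θ i) = ∑ i, sin (gap i) := by
        refine Finset.sum_congr rfl fun i _ => ?_
        simp only [gap]
        split_ifs <;> simp
    _ ≤ n * sin (2 * π / n) :=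
      sum_sin_le_of_sum_eq_two_pi hn (by simpa using hm) (fun i _ => hgap i) hsum

end SineSum

section Ellipse

open Real Set

/-- The point of the ellipse `u² / a² + v² / b² = 1` with eccentric angle `t`. -/
noncomputable def ellipsePoint (a b t : ℝ) : ℝ × ℝ := (a * cos t, b * sin t)

lemma det₂_ellipsePoint (a b s t : ℝ) :
    det₂ (ellipsePoint a b s) (ellipsePoint a b t) = a * b * sin (t - s) := by
  simp only [det₂_apply, ellipsePoint, sin_sub]
  ring

lemma sin_two_mul_add_sin_two_mul_sub (x y : ℝ) :
    sin (2 * x) + sin (2 * y) - sin (2 * (x + y)) = 4 * sin x * sin y * sin (x + y) := by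
  simp only [sin_two_mul, sin_add, cos_add]
  linear_combination (-2 * sin y * cos y) * sin_sq_add_cos_sq x +
    (-2 * sin x * cos x) * sin_sq_add_cos_sq y

lemma orient_ellipsePoint (a b r s t : ℝ) :
    orient (ellipsePoint a b r) (ellipsePoint a b s) (ellipsePoint a b t) =
      4 * a * b * sin ((s - r) / 2) * sin ((t - s) / 2) * sin ((t - r) / 2) := by
  have h := sin_two_mul_add_sin_two_mul_sub ((s - r) / 2) ((t - s) / 2)
  simp only [← add_div, mul_div_cancel₀ _ (two_ne_zero' ℝ), sub_add_sub_cancel'] at h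
  rw [orient_eq_det₂_add, det₂_ellipsePoint, det₂_ellipsePoint, det₂_ellipsePoint, ← neg_sub t r,
    sin_neg]
  linear_combination a * b * h

variable {a b : ℝ}

lemma isConvexPolygon_ellipsePoint (ha : 0 < a) (hb : 0 < b) {n : ℕ} {θ : Fin n → ℝ}
    (hθ : StrictMono θ) (hturn : ∀ i j, θ j < θ i + 2 * π) :
    IsConvexPolygon fun i => ellipsePoint a b (θ i) := by
  intro i j k hij hjk
  have hsin {l m : Fin n} (hlm : l < m) : 0 < sin ((θ m - θ l) / 2) :=
    sin_pos_of_pos_of_lt_pi (by linarith [hθ hlm]) (by linarith [hturn l m])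
  rw [orient_ellipsePoint]
  have := hsin hij
  have := hsin hjk
  have := hsin (hij.trans hjk)
  positivity

lemma volume_real_convexHull_ellipsePoint (ha : 0 < a) (hb : 0 < b) {m : ℕ} {θ : Fin (m + 1) → ℝ}
    (hθ : StrictMono θ) (hturn : ∀ i j, θ j < θ i + 2 * π) :
    volume.real (convexHull ℝ (range fun i => ellipsePoint a b (θ i))) =
      a * b / 2 * ∑ i, sin (θ (i + 1) - θ i) := by
  rw [(isConvexPolygon_ellipsePoint ha hb hθ hturn).volume_real_convexHull_range]
  simp only [det₂_ellipsePoint, ← Finset.mul_sum]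
  ring

/-- The ellipse with semi-axes `a` and `b`, as a curve: the boundary of the solid ellipse. -/
def ellipse (a b : ℝ) : Set (ℝ × ℝ) := {p | p.1 ^ 2 / a ^ 2 + p.2 ^ 2 / b ^ 2 = 1}

lemma ellipsePoint_mem_ellipse (ha : a ≠ 0) (hb : b ≠ 0) (t : ℝ) :
    ellipsePoint a b t ∈ ellipse a b := by
  simp [ellipse, ellipsePoint, mul_pow, ha, hb]

lemma exists_eq_ellipsePoint (ha : a ≠ 0) (hb : b ≠ 0) {p : ℝ × ℝ} (hp : p ∈ ellipse a b) :
    ∃ t ∈ Ioc (-π) π, ellipsePoint a b t = p := by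
  let z : ℂ := ⟨p.1 / a, p.2 / b⟩
  have hz : ‖z‖ = 1 := by
    have hp' : p.1 ^ 2 / a ^ 2 + p.2 ^ 2 / b ^ 2 = 1 := hp
    rw [← sq_eq_sq₀ (norm_nonneg z) zero_le_one, Complex.sq_norm, Complex.normSq_apply]
    simpa [z, ← sq, div_pow] using hp'
  refine ⟨z.arg, Complex.arg_mem_Ioc z, Prod.ext ?_ ?_⟩
  · simpa [z, hz, ellipsePoint, mul_div_cancel₀ _ ha] using
      congrArg (a * ·) (Complex.norm_mul_cos_arg z)
  · simpa [z, hz, ellipsePoint, mul_div_cancel₀ _ hb] using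
      congrArg (b * ·) (Complex.norm_mul_sin_arg z)

lemma exists_strictMono_range_ellipsePoint (ha : a ≠ 0) (hb : b ≠ 0) {S : Finset (ℝ × ℝ)}
    (hS : ↑S ⊆ ellipse a b) :
    ∃ (k : ℕ) (θ : Fin k → ℝ), k ≤ S.card ∧ StrictMono θ ∧ (∀ i j, θ j < θ i + 2 * π) ∧
      range (fun i => ellipsePoint a b (θ i)) = S := by
  choose! angle hangle using fun p hp => exists_eq_ellipsePoint ha hb (p := p) (hS hp)
  let θ := (S.image angle).orderEmbOfFin rfl
  have hrange : range θ = angle '' S := by simp [θ]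
  have hIoc (i) : θ i ∈ Ioc (-π) π := by
    obtain ⟨p, hp, hpi⟩ := hrange.subset (mem_range_self i)
    exact hpi ▸ (hangle p hp).1
  refine ⟨_, θ, Finset.card_image_le, θ.strictMono, fun i j => ?_, ?_⟩
  · linarith [(hIoc i).1, (hIoc j).2]
  · rw [← Function.comp_def (ellipsePoint a b) θ, range_comp, hrange, image_image,
      image_congr fun p hp => (hangle p hp).2, image_id']

lemma volume_real_convexHull_le_of_subset_ellipse (ha : 0 < a) (hb : 0 < b) {n : ℕ} (hn : 3 ≤ n)
    {S : Finset (ℝ × ℝ)} (hS : ↑S ⊆ ellipse a b) (hcard : S.card ≤ n) :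
    volume.real (convexHull ℝ (S : Set (ℝ × ℝ))) ≤ n / 2 * a * b * sin (2 * π / n) := by
  obtain ⟨k, θ, hk, hθ, hturn, hrange⟩ := exists_strictMono_range_ellipsePoint ha.ne' hb.ne' hS
  rw [← hrange]
  cases k with
  | zero =>
    have : 0 ≤ sin (2 * π / n) := by
      simpa using sin_div_le_sin_two_mul_pi_div (r := n) (by exact_mod_cast hn) le_rfl pi_pos.le
    simp only [range_eq_empty, convexHull_empty, measureReal_empty]
    positivity
  | succ m =>
    rw [volume_real_convexHull_ellipsePoint ha hb hθ hturn]
    calc a * b / 2 * ∑ i, sin (θ (i + 1) - θ i) ≤ a * b / 2 * (n * sin (2 * π / n)) := by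
          gcongr
          exact sum_sin_sub_le_of_monotone hn (hk.trans hcard) hθ.monotone (hturn _ _).le
      _ = n / 2 * a * b * sin (2 * π / n) := by ring

lemma volume_real_convexHull_equispaced_ellipsePoint (ha : 0 < a) (hb : 0 < b) {n : ℕ}
    (hn : n ≠ 0) :
    volume.real (convexHull ℝ (range fun i : Fin n => ellipsePoint a b (i * (2 * π / n)))) =
      n / 2 * a * b * sin (2 * π / n) := by
  obtain ⟨m, rfl⟩ := Nat.exists_eq_succ_of_ne_zero hn
  set c := 2 * π / (m + 1 : ℕ) with hc
  have hc₀ : 0 < c := by positivity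
  have hturn : (m + 1) * c = 2 * π := by
    rw [hc]
    push_cast
    field_simp
  rw [volume_real_convexHull_ellipsePoint (θ := fun i => i * c) ha hb]
  · have hstep (i : Fin (m + 1)) : sin (((i + 1 : Fin (m + 1)) : ℕ) * c - i * c) = sin c := by
      rcases eq_or_ne i (Fin.last m) with rfl | hi
      · rw [Fin.last_add_one, ← sin_sub_two_pi c, ← hturn]
        congr 1
        simp only [Fin.val_zero, Fin.val_last, Nat.cast_zero]
        ring
      · rw [Fin.val_add_one_of_lt (Fin.lt_last_iff_ne_last.2 hi)]
        congr 1
        push_cast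
        ring
    simp only [hstep, Finset.sum_const, Finset.card_univ, Fintype.card_fin, nsmul_eq_mul]
    ring
  · intro i j hij
    exact mul_lt_mul_of_pos_right (by exact_mod_cast hij) hc₀
  · intro i j
    calc (j : ℝ) * c < (m + 1 : ℕ) * c := by gcongr; exact j.is_lt
      _ = 2 * π := by exact_mod_cast hturn
      _ ≤ i * c + 2 * π := le_add_of_nonneg_left (by positivity)

theorem isGreatest_volume_real_convexHull_ellipse (ha : 0 < a) (hb : 0 < b) {n : ℕ} (hn : 3 ≤ n) :
    IsGreatest {A | ∃ S : Finset (ℝ × ℝ), ↑S ⊆ ellipse a b ∧ S.card ≤ n ∧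
      A = volume.real (convexHull ℝ (S : Set (ℝ × ℝ)))} (n / 2 * a * b * sin (2 * π / n)) := by
  constructor
  · refine ⟨Finset.univ.image fun i : Fin n => ellipsePoint a b (i * (2 * π / n)), ?_,
      Finset.card_image_le.trans (by simp), ?_⟩
    · rw [Finset.coe_image, Finset.coe_univ, image_univ]
      exact range_subset_iff.2 fun i => ellipsePoint_mem_ellipse ha.ne' hb.ne' _
    · rw [Finset.coe_image, Finset.coe_univ, image_univ,
        volume_real_convexHull_equispaced_ellipsePoint ha hb (by omega)]
  · rintro _ ⟨S, hS, hcard, rfl⟩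
    exact volume_real_convexHull_le_of_subset_ellipse ha hb hn hS hcard

lemma volume_real_unitDisc : volume.real {p : ℝ × ℝ | p.1 ^ 2 + p.2 ^ 2 ≤ 1} = π := by
  have hdisc : Complex.measurableEquivRealProd ⁻¹' {p : ℝ × ℝ | p.1 ^ 2 + p.2 ^ 2 ≤ 1} =
      Metric.closedBall 0 1 := by
    ext z
    rw [mem_closedBall_zero_iff, ← sq_le_one_iff₀ (norm_nonneg z), Complex.sq_norm,
      Complex.normSq_apply, ← sq, ← sq]
    rfl
  rw [Measure.real, ← Complex.volume_preserving_equiv_real_prod.measure_preimage_equiv, hdisc,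
    Complex.volume_closedBall]
  simp

lemma volume_real_solidEllipse (ha : 0 < a) (hb : 0 < b) :
    volume.real {p : ℝ × ℝ | p.1 ^ 2 / a ^ 2 + p.2 ^ 2 / b ^ 2 ≤ 1} = π * a * b := by
  have hpre : {p : ℝ × ℝ | p.1 ^ 2 / a ^ 2 + p.2 ^ 2 / b ^ 2 ≤ 1} =
      ofColumns (a⁻¹, 0) (0, b⁻¹) ⁻¹' {p : ℝ × ℝ | p.1 ^ 2 + p.2 ^ 2 ≤ 1} := by
    ext p
    simp [ofColumns_apply, ← div_eq_mul_inv, div_pow]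
  have hdet : LinearMap.det (ofColumns (a⁻¹, 0) (0, b⁻¹)) = (a * b)⁻¹ := by
    rw [det_ofColumns, det₂_apply, mul_inv]
    simp
  rw [hpre, Measure.real, Measure.addHaar_preimage_linearMap _ (by rw [hdet]; positivity), hdet,
    inv_inv, ENNReal.toReal_mul, ENNReal.toReal_ofReal (abs_nonneg _),
    abs_of_pos (mul_pos ha hb), ← Measure.real, volume_real_unitDisc]
  ring

end Ellipse

theorem stmt_17 (a b : ℝ) (ha : 0 < a) (hb : 0 < b)
    (E : Set (ℝ × ℝ)) (hE : E = {p : ℝ × ℝ | p.1 ^ 2 / a ^ 2 + p.2 ^ 2 / b ^ 2 ≤ 1})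
    (n : ℕ) (hn : 3 ≤ n) :
    sSup { A : ℝ | ∃ S : Finset (ℝ × ℝ),
        ↑S ⊆ {p : ℝ × ℝ | p.1 ^ 2 / a ^ 2 + p.2 ^ 2 / b ^ 2 = 1} ∧ S.card ≤ n ∧
        A = (volume (convexHull ℝ (S : Set (ℝ × ℝ)))).toReal } =
      (n : ℝ) / 2 * a * b * Real.sin (2 * Real.pi / n) ∧
    (volume E).toReal -
      sSup { A : ℝ | ∃ S : Finset (ℝ × ℝ),
        ↑S ⊆ {p : ℝ × ℝ | p.1 ^ 2 / a ^ 2 + p.2 ^ 2 / b ^ 2 = 1} ∧ S.card ≤ n ∧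
        A = (volume (convexHull ℝ (S : Set (ℝ × ℝ)))).toReal } =
      Real.pi * a * b - (n : ℝ) / 2 * a * b * Real.sin (2 * Real.pi / n) := by
  have hsup := (isGreatest_volume_real_convexHull_ellipse ha hb hn).csSup_eq
  have harea := volume_real_solidEllipse ha hb
  subst hE
  exact ⟨hsup, congrArg₂ (· - ·) harea hsup⟩
end

section
/- Let a, b > 0, let E := {(u,v) ∈ ℝ² : u²/a² + v²/b² ≤ 1} be a solid ellipse, and let n ≥ 3 be an integer. Then the minimal area of a convex polygon with at most n vertices containing E is inf{ Area(convexHull(S)) : S ⊂ ℝ² finite, |S| ≤ n, E ⊆ convexHull(S) } = n·a·b·tan(π/n); consequently δ_c(n) := this infimum − Area(E) equals n·a·b·tan(π/n) − π·a·b. -/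
open MeasureTheory

/-!
By a linear change of variables it suffices to treat the unit disc. Put `R = 1 / cos (π / n)`. A
polygon with at most `n` vertices around the unit disc is an intersection of at most `n` half-planes
`{x | ⟪f, x⟫ ≤ 1}` with `‖f‖ ≤ 1`: take for `f` the extreme points of the polar set, each of which
is determined by the vertex at which its edge starts. Each of these half-planes cuts a cap off the
disc of radius `R` that is no larger than the cap cut off by a tangent line of the unit circle.
Hence the polygon together with `n` tangent caps has at least the area `π R²`. For the regular
`n`-gon inscribed in the circle of radius `R` the tangent caps are pairwise disjoint and fill up the
complement of the polygon, so that equality holds.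
-/

section Polar

open Metric
open scoped RealInnerProductSpace

variable {V : Type*} [NormedAddCommGroup V] [InnerProductSpace ℝ V]

/-- The one-sided polar set of `s`: the normals `f` of the half-spaces `{x | ⟪f, x⟫ ≤ 1}` that
contain `s`. Mathlib's `LinearMap.polar` is the symmetric version, with `‖⟪f, x⟫‖ ≤ 1`. -/
def oneSidedPolar (s : Set V) : Set V := {f | ∀ x ∈ s, ⟪f, x⟫ ≤ 1}

namespace oneSidedPolar

lemma mem_iff {s : Set V} {f : V} : f ∈ oneSidedPolar s ↔ ∀ x ∈ s, ⟪f, x⟫ ≤ 1 := Iff.rfl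

lemma subset_iff_subset {s t : Set V} : s ⊆ oneSidedPolar t ↔ t ⊆ oneSidedPolar s :=
  ⟨fun h x hx y hy ↦ real_inner_comm x y ▸ h hy x hx,
    fun h y hy x hx ↦ real_inner_comm x y ▸ h hx y hy⟩

lemma subset_bipolar (s : Set V) : s ⊆ oneSidedPolar (oneSidedPolar s) :=
  subset_iff_subset.mp subset_rfl

lemma antitone : Antitone (oneSidedPolar : Set V → Set V) :=
  fun _ _ hst _ hf x hx ↦ hf x (hst hx)

lemma eq_biInter (s : Set V) : oneSidedPolar s = ⋂ x ∈ s, {f | ⟪x, f⟫ ≤ 1} := by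
  ext f
  simp only [mem_iff, Set.mem_iInter, Set.mem_ofPred_eq, real_inner_comm]

protected lemma isClosed (s : Set V) : IsClosed (oneSidedPolar s) := by
  rw [eq_biInter]
  exact isClosed_biInter fun x _ ↦ isClosed_le (by fun_prop) continuous_const

protected lemma convex (s : Set V) : Convex ℝ (oneSidedPolar s) := by
  rw [eq_biInter]
  exact convex_iInter₂ fun x _ ↦ convex_halfSpace_le (innerₛₗ ℝ x).isLinear 1

lemma closure_convexHull (s : Set V) :
    oneSidedPolar (closure (convexHull ℝ s)) = oneSidedPolar s :=
  (antitone ((subset_convexHull ℝ s).trans subset_closure)).antisymm <|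
    subset_iff_subset.mpr <| closure_minimal
      (convexHull_min (subset_bipolar s) (oneSidedPolar.convex _)) (oneSidedPolar.isClosed _)

lemma convexHull_finset (S : Finset V) :
    oneSidedPolar (convexHull ℝ (S : Set V)) = oneSidedPolar (S : Set V) := by
  rw [← closure_convexHull (S : Set V), (S.finite_toSet.isClosed_convexHull ℝ).closure_eq]

lemma extremePoints {K : Set V} (hK : IsCompact K) (hKconv : Convex ℝ K) :
    oneSidedPolar (K.extremePoints ℝ) = oneSidedPolar K := by
  rw [← closure_convexHull, closure_convexHull_extremePoints hK hKconv]

lemma subset_closedBall {s : Set V} {r : ℝ} (hr : 0 < r) (hs : closedBall 0 r ⊆ s) :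
    oneSidedPolar s ⊆ closedBall 0 r⁻¹ := by
  intro f hf
  have hx : (r / ‖f‖) • f ∈ closedBall (0 : V) r := by
    rw [mem_closedBall_zero_iff, norm_smul, Real.norm_of_nonneg (by positivity), div_mul_comm]
    exact mul_le_of_le_one_left hr.le (div_self_le_one _)
  have hfx : ⟪f, (r / ‖f‖) • f⟫ = r * ‖f‖ := by
    rw [real_inner_smul_right, real_inner_self_eq_norm_sq, div_mul_eq_mul_div, sq, mul_div_assoc,
      mul_self_div_self]
  rw [mem_closedBall_zero_iff, ← one_div, le_div_iff₀' hr, ← hfx]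
  exact hf _ (hs hx)

end oneSidedPolar

lemma exists_inner_lt_of_notMem [CompleteSpace V] {s : Set V} (hconv : Convex ℝ s)
    (hclosed : IsClosed s) {x : V} (hx : x ∉ s) :
    ∃ (f : V) (u : ℝ), (∀ y ∈ s, ⟪f, y⟫ < u) ∧ u < ⟪f, x⟫ := by
  obtain ⟨g, u, hgs, hgx⟩ := geometric_hahn_banach_closed_point hconv hclosed hx
  refine ⟨(InnerProductSpace.toDual ℝ V).symm g, u, ?_⟩
  simpa only [InnerProductSpace.toDual_symm_apply] using ⟨hgs, hgx⟩

lemma oneSidedPolar_oneSidedPolar [CompleteSpace V] {s : Set V} (hconv : Convex ℝ s)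
    (hclosed : IsClosed s) (h0 : 0 ∈ s) : oneSidedPolar (oneSidedPolar s) = s := by
  refine Set.Subset.antisymm (fun x hx ↦ ?_) (oneSidedPolar.subset_bipolar s)
  by_contra hxs
  obtain ⟨f, u, hfs, hfx⟩ := exists_inner_lt_of_notMem hconv hclosed hxs
  have hu : 0 < u := by simpa using hfs 0 h0
  have hf : u⁻¹ • f ∈ oneSidedPolar s := fun y hy ↦ by
    rw [real_inner_smul_left, inv_mul_le_one₀ hu]
    exact (hfs y hy).le
  have := hx _ hf
  rw [real_inner_comm, real_inner_smul_left, inv_mul_le_one₀ hu] at this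
  exact hfx.not_ge this

-- Otherwise `f ± ε • g` would stay in the polar set for small `ε`.
lemma eq_zero_of_mem_extremePoints_oneSidedPolar {S : Finset V} {f g : V}
    (hf : f ∈ (oneSidedPolar (S : Set V)).extremePoints ℝ)
    (hg : ∀ s ∈ S, ⟪f, s⟫ = 1 → ⟪g, s⟫ = 0) : g = 0 := by
  obtain ⟨hfS, hext⟩ := mem_extremePoints.mp hf
  have hsmall : ∀ᶠ ε in nhdsWithin (0 : ℝ) (Set.Ioi 0), ∀ s ∈ S, ε * |⟪g, s⟫| ≤ 1 - ⟪f, s⟫ := by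
    refine (Filter.eventually_all_finset S).mpr fun s hs ↦ ?_
    obtain htight | hslack := (hfS s hs).eq_or_lt
    · simp [htight, hg s hs htight]
    · have hlim : Filter.Tendsto (fun ε : ℝ ↦ ε * |⟪g, s⟫|) (nhds 0) (nhds 0) :=
        Continuous.tendsto' (by fun_prop) _ _ (zero_mul _)
      exact nhdsWithin_le_nhds
        ((hlim.eventually_lt_const (sub_pos.mpr hslack)).mono fun _ ↦ le_of_lt)
  obtain ⟨ε, hε, hpos : 0 < ε⟩ := (hsmall.and self_mem_nhdsWithin).exists
  have hadd : f + ε • g ∈ oneSidedPolar (S : Set V) := fun s hs ↦ by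
    rw [inner_add_left, real_inner_smul_left]
    linarith [hε s hs, mul_le_mul_of_nonneg_left (le_abs_self ⟪g, s⟫) hpos.le]
  have hsub : f - ε • g ∈ oneSidedPolar (S : Set V) := fun s hs ↦ by
    rw [inner_sub_left, real_inner_smul_left]
    linarith [hε s hs, mul_le_mul_of_nonneg_left (neg_abs_le ⟪g, s⟫) hpos.le]
  have hmid : f ∈ openSegment ℝ (f + ε • g) (f - ε • g) :=
    ⟨1 / 2, 1 / 2, by norm_num, by norm_num, by norm_num, by module⟩
  have hεg : ε • g = 0 := by simpa using (hext _ hadd _ hsub hmid).1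
  exact (smul_eq_zero.mp hεg).resolve_left hpos.ne'

end Polar

section Plane

open Metric Module
open scoped RealInnerProductSpace

variable {V : Type*} [NormedAddCommGroup V] [InnerProductSpace ℝ V] [Fact (finrank ℝ V = 2)]

lemma exists_areaForm_pos_of_mem_extremePoints_oneSidedPolar (o : Orientation ℝ V (Fin 2))
    {S : Finset V} {f : V} (hf : f ∈ (oneSidedPolar (S : Set V)).extremePoints ℝ) :
    ∃ v ∈ S, ∃ w ∈ S, ⟪f, v⟫ = 1 ∧ ⟪f, w⟫ = 1 ∧ 0 < o.areaForm v w := by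
  have : Nontrivial V := nontrivial_of_finrank_eq_succ (n := 1) (Fact.out : finrank ℝ V = 2)
  obtain ⟨v, hvS, hv⟩ : ∃ v ∈ S, ⟪f, v⟫ = 1 := by
    by_contra! hnone
    obtain ⟨g, hg⟩ := exists_ne (0 : V)
    exact hg <| eq_zero_of_mem_extremePoints_oneSidedPolar hf fun s hs h ↦ absurd h (hnone s hs)
  by_contra! hnonpos
  have hJv : o.rightAngleRotation v = 0 :=
    eq_zero_of_mem_extremePoints_oneSidedPolar hf fun s hs hfs ↦ by
      rw [o.inner_rightAngleRotation_left]
      have hsv := hnonpos s hs v hvS hfs hv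
      rw [o.areaForm_swap] at hsv
      exact (hnonpos v hvS s hs hv hfs).antisymm (neg_nonpos.mp hsv)
  obtain rfl : v = 0 := by simpa using hJv
  simp at hv

-- An edge of the polar polygon has a unique endpoint in the positive direction.
lemma eq_of_inner_eq_one_of_areaForm_pos (o : Orientation ℝ V (Fin 2)) {s : Set V}
    {f f' v w w' : V} (hf : f ∈ oneSidedPolar s) (hf' : f' ∈ oneSidedPolar s)
    (hw : w ∈ s) (hw' : w' ∈ s) (hfv : ⟪f, v⟫ = 1) (hfv' : ⟪f', v⟫ = 1)
    (hfw : ⟪f, w⟫ = 1) (hfw' : ⟪f', w'⟫ = 1)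
    (hvw : 0 < o.areaForm v w) (hvw' : 0 < o.areaForm v w') : f = f' := by
  have horth : ⟪v, f - f'⟫ = 0 := by
    rw [real_inner_comm, inner_sub_left, hfv, hfv', sub_self]
  have hprod (x : V) : o.areaForm v (f - f') * o.areaForm v x = ‖v‖ ^ 2 * (⟪f, x⟫ - ⟪f', x⟫) := by
    rw [← inner_sub_left, ← o.inner_mul_inner_add_areaForm_mul_areaForm, horth, zero_mul, zero_add]
  have hnonneg : 0 ≤ o.areaForm v (f - f') := by
    refine nonneg_of_mul_nonneg_left ?_ hvw
    rw [hprod, hfw]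
    exact mul_nonneg (sq_nonneg _) (sub_nonneg.mpr (hf' w hw))
  have hnonpos : o.areaForm v (f - f') ≤ 0 := by
    refine nonpos_of_mul_nonpos_left ?_ hvw'
    rw [hprod, hfw']
    exact mul_nonpos_of_nonneg_of_nonpos (sq_nonneg _) (sub_nonpos.mpr (hf w' hw'))
  have hv : v ≠ 0 := by rintro rfl; simp at hfv
  have hsq := o.inner_sq_add_areaForm_sq v (f - f')
  rw [horth, hnonpos.antisymm hnonneg] at hsq
  simpa [hv, sub_eq_zero, eq_comm] using hsq

lemma encard_extremePoints_oneSidedPolar_le (S : Finset V) :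
    ((oneSidedPolar (S : Set V)).extremePoints ℝ).encard ≤ S.card := by
  have : FiniteDimensional ℝ V := .of_fact_finrank_eq_two
  let o : Orientation ℝ V (Fin 2) := (finBasisOfFinrankEq ℝ V Fact.out).orientation
  choose! v hvS w hwS hfv hfw hvw using
    fun f ↦ exists_areaForm_pos_of_mem_extremePoints_oneSidedPolar o (S := S) (f := f)
  rw [← Set.encard_coe_eq_coe_finsetCard]
  refine Set.encard_le_encard_of_injOn (f := v) hvS fun f hf f' hf' hff' ↦ ?_
  exact eq_of_inner_eq_one_of_areaForm_pos o hf.1 hf'.1 (hwS f hf) (hwS f' hf') (hfv f hf)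
    (hff' ▸ hfv f' hf') (hfw f hf) (hfw f' hf') (hvw f hf) (hff' ▸ hvw f' hf')

lemma exists_finset_oneSidedPolar_eq_convexHull {S : Finset V}
    (hS : 0 ∈ interior (convexHull ℝ (S : Set V))) :
    ∃ F : Finset V, F.card ≤ S.card ∧ oneSidedPolar (F : Set V) = convexHull ℝ (S : Set V) := by
  have : FiniteDimensional ℝ V := .of_fact_finrank_eq_two
  obtain ⟨r, hr, hrS⟩ := nhds_basis_closedBall.mem_iff.mp (mem_interior_iff_mem_nhds.mp hS)
  set K := oneSidedPolar (convexHull ℝ (S : Set V)) with hK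
  have hKcompact : IsCompact K := (isCompact_closedBall (0 : V) r⁻¹).of_isClosed_subset
    (oneSidedPolar.isClosed _) (oneSidedPolar.subset_closedBall hr hrS)
  have hcard : (K.extremePoints ℝ).encard ≤ S.card := by
    rw [hK, oneSidedPolar.convexHull_finset]
    exact encard_extremePoints_oneSidedPolar_le S
  have hfin : (K.extremePoints ℝ).Finite := Set.finite_of_encard_le_coe hcard
  refine ⟨hfin.toFinset, ?_, ?_⟩
  · rwa [hfin.encard_eq_coe_toFinset_card, Nat.cast_le] at hcard
  · rw [hfin.coe_toFinset, oneSidedPolar.extremePoints hKcompact (oneSidedPolar.convex _)]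
    exact oneSidedPolar_oneSidedPolar (convex_convexHull ℝ _)
      (S.finite_toSet.isClosed_convexHull ℝ) (interior_subset hS)

end Plane

section Caps

open Metric
open scoped RealInnerProductSpace

variable {V : Type*} [NormedAddCommGroup V] [InnerProductSpace ℝ V]

/-- The part of the closed ball of radius `R` about `0` that the half-space `{x | ⟪f, x⟫ ≤ 1}`
cuts off. -/
def ballCap (R : ℝ) (f : V) : Set V := closedBall 0 R ∩ {x | 1 < ⟪f, x⟫}

namespace ballCap

lemma subset_closedBall (R : ℝ) (f : V) : ballCap R f ⊆ closedBall 0 R := Set.inter_subset_left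

lemma subset_smul (R : ℝ) (f : V) {c : ℝ} (hc : 1 ≤ c) : ballCap R f ⊆ ballCap R (c • f) := by
  rintro x ⟨hxR, hfx : 1 < ⟪f, x⟫⟩
  refine ⟨hxR, ?_⟩
  rw [Set.mem_ofPred_eq, real_inner_smul_left]
  nlinarith

lemma disjoint {R : ℝ} {f g : V} (hfg : ‖f + g‖ * R ≤ 2) :
    Disjoint (ballCap R f) (ballCap R g) := by
  refine Set.disjoint_left.mpr fun x ⟨hxR, (hfx : 1 < ⟪f, x⟫)⟩ ⟨_, (hgx : 1 < ⟪g, x⟫)⟩ ↦ ?_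
  refine hfg.not_gt ?_
  calc 2 < ⟪f + g, x⟫ := by rw [inner_add_left]; linarith
    _ ≤ ‖f + g‖ * ‖x‖ := real_inner_le_norm _ _
    _ ≤ ‖f + g‖ * R := by gcongr; exact mem_closedBall_zero_iff.mp hxR

lemma preimage_linearIsometryEquiv (e : V ≃ₗᵢ[ℝ] V) (R : ℝ) (f : V) :
    e ⁻¹' ballCap R (e f) = ballCap R f := by
  ext x
  simp [ballCap]

variable [MeasurableSpace V] [BorelSpace V]

protected lemma measurableSet (R : ℝ) (f : V) : MeasurableSet (ballCap R f) :=
  isClosed_closedBall.measurableSet.inter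
    (isOpen_lt continuous_const (by fun_prop)).measurableSet

variable [FiniteDimensional ℝ V]

lemma volume_eq_of_norm_eq (R : ℝ) {f g : V} (hfg : ‖f‖ = ‖g‖) :
    volume (ballCap R f) = volume (ballCap R g) := by
  set e := (ℝ ∙ (f - g))ᗮ.reflection
  have hefg : e f = g := Submodule.reflection_sub hfg
  rw [← hefg, ← preimage_linearIsometryEquiv e,
    e.measurePreserving.measure_preimage (ballCap.measurableSet R _).nullMeasurableSet]

lemma volume_mono_norm (R : ℝ) {f g : V} (hfg : ‖f‖ ≤ ‖g‖) :
    volume (ballCap R f) ≤ volume (ballCap R g) := by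
  obtain rfl | hf := eq_or_ne f 0
  · simp [ballCap, not_lt.mpr zero_le_one]
  have hf' := norm_pos_iff.mpr hf
  have hnorm : ‖(‖g‖ / ‖f‖) • f‖ = ‖g‖ := by
    rw [norm_smul, Real.norm_of_nonneg (by positivity), div_mul_cancel₀ _ hf'.ne']
  calc volume (ballCap R f)
      ≤ volume (ballCap R ((‖g‖ / ‖f‖) • f)) :=
        measure_mono (subset_smul R f ((one_le_div hf').mpr hfg))
    _ = volume (ballCap R g) := volume_eq_of_norm_eq R hnorm

lemma volume_closedBall_le (R : ℝ) {F : Finset V} {u : V} (hF : ∀ f ∈ F, ‖f‖ ≤ ‖u‖) :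
    volume (closedBall (0 : V) R) ≤
      volume (oneSidedPolar (F : Set V)) + F.card * volume (ballCap R u) := by
  have hcover : closedBall 0 R ⊆ oneSidedPolar (F : Set V) ∪ ⋃ f ∈ F, ballCap R f := by
    intro x hxR
    by_cases! hx : ∃ f ∈ F, 1 < ⟪f, x⟫
    · obtain ⟨f, hf, hfx⟩ := hx
      exact Or.inr (Set.mem_biUnion hf ⟨hxR, hfx⟩)
    · exact Or.inl fun f hf ↦ real_inner_comm x f ▸ hx f hf
  calc volume (closedBall (0 : V) R)
      ≤ volume (oneSidedPolar (F : Set V)) + volume (⋃ f ∈ F, ballCap R f) :=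
        (measure_mono hcover).trans (measure_union_le _ _)
    _ ≤ volume (oneSidedPolar (F : Set V)) + ∑ f ∈ F, volume (ballCap R f) := by
        gcongr
        exact measure_biUnion_finset_le F _
    _ ≤ volume (oneSidedPolar (F : Set V)) + F.card * volume (ballCap R u) := by
        gcongr
        rw [← nsmul_eq_mul]
        exact Finset.sum_le_card_nsmul _ _ _ fun f hf ↦ volume_mono_norm R (hF f hf)

lemma volume_add_card_mul_le {R : ℝ} {P : Set V} (hPR : P ⊆ closedBall 0 R) {ι : Type*}
    {I : Finset ι} {f : ι → V} {u : V} (hf : ∀ i ∈ I, ‖f i‖ = ‖u‖)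
    (hfP : ∀ i ∈ I, f i ∈ oneSidedPolar P)
    (hdisj : (I : Set ι).PairwiseDisjoint fun i ↦ ballCap R (f i)) :
    volume P + I.card * volume (ballCap R u) ≤ volume (closedBall (0 : V) R) := by
  have hPcaps : Disjoint P (⋃ i ∈ I, ballCap R (f i)) :=
    Set.disjoint_iUnion₂_right.mpr fun i hi ↦ Set.disjoint_right.mpr fun x hx hxP ↦
      (hfP i hi x hxP).not_gt hx.2
  have hmeas (i : ι) (_ : i ∈ I) := ballCap.measurableSet R (f i)
  calc volume P + I.card * volume (ballCap R u)
      = volume P + ∑ i ∈ I, volume (ballCap R (f i)) := by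
        rw [Finset.sum_congr rfl fun i hi ↦ volume_eq_of_norm_eq R (hf i hi), Finset.sum_const,
          nsmul_eq_mul]
    _ = volume (P ∪ ⋃ i ∈ I, ballCap R (f i)) := by
        rw [measure_union hPcaps (I.measurableSet_biUnion hmeas),
          measure_biUnion_finset hdisj hmeas]
    _ ≤ volume (closedBall (0 : V) R) :=
        measure_mono <| Set.union_subset hPR <| Set.iUnion₂_subset fun i _ ↦ subset_closedBall R _

end ballCap

end Caps

section PlaneCaps

open Metric Module

variable {V : Type*} [NormedAddCommGroup V] [InnerProductSpace ℝ V] [Fact (finrank ℝ V = 2)]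
  [FiniteDimensional ℝ V] [MeasurableSpace V] [BorelSpace V]

lemma volume_closedBall_le_volume_convexHull_add {S : Finset V}
    (hS : closedBall 0 1 ⊆ convexHull ℝ (S : Set V)) (R : ℝ) {u : V} (hu : ‖u‖ = 1) :
    volume (closedBall (0 : V) R) ≤
      volume (convexHull ℝ (S : Set V)) + S.card * volume (ballCap R u) := by
  have hinterior : 0 ∈ interior (convexHull ℝ (S : Set V)) :=
    mem_interior_iff_mem_nhds.mpr <| Filter.mem_of_superset (closedBall_mem_nhds 0 one_pos) hS
  obtain ⟨F, hFS, hF⟩ := exists_finset_oneSidedPolar_eq_convexHull hinterior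
  have hnorm : ∀ f ∈ F, ‖f‖ ≤ ‖u‖ := fun f hf ↦ by
    have := oneSidedPolar.subset_closedBall one_pos (hF ▸ hS) (oneSidedPolar.subset_bipolar _ hf)
    rwa [inv_one, mem_closedBall_zero_iff, ← hu] at this
  rw [← hF]
  exact (ballCap.volume_closedBall_le R hnorm).trans (by gcongr)

end PlaneCaps

section CapArea

open Complex Metric
open scoped Real

lemma cos_lt_cos_iff_mem_Ioo {t θ : ℝ} (ht : t ∈ Set.Icc 0 π) (hθ : θ ∈ Set.Icc (-π) π) :
    Real.cos t < Real.cos θ ↔ θ ∈ Set.Ioo (-t) t := by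
  rw [Set.mem_Ioo, ← abs_lt, ← Real.cos_abs θ]
  exact Real.strictAntiOn_cos.lt_iff_gt ht ⟨abs_nonneg θ, abs_le.mpr hθ⟩

lemma polarCoord_symm_mem_ballCap_one {t r θ : ℝ} (ht : t ∈ Set.Ioo 0 (π / 2))
    (hr : 0 < r) (hθ : θ ∈ Set.Ioo (-π) π) :
    Complex.polarCoord.symm (r, θ) ∈ ballCap (Real.cos t)⁻¹ (1 : ℂ) ↔
      θ ∈ Set.Ioo (-t) t ∧ r ∈ Set.Ioc (Real.cos θ)⁻¹ (Real.cos t)⁻¹ := by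
  have hcos : 0 < Real.cos t := Real.cos_pos_of_mem_Ioo ⟨by linarith [ht.1, Real.pi_pos], ht.2⟩
  have hball : Complex.polarCoord.symm (r, θ) ∈ ballCap (Real.cos t)⁻¹ (1 : ℂ) ↔
      r ≤ (Real.cos t)⁻¹ ∧ 1 < r * Real.cos θ := by
    rw [ballCap, Set.mem_inter_iff, mem_closedBall_zero_iff, norm_polarCoord_symm, abs_of_pos hr]
    simp [Complex.inner, -Complex.ofReal_cos]
  have htπ : t ∈ Set.Icc 0 π := ⟨ht.1.le, by linarith [ht.2, Real.pi_pos]⟩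
  rw [hball, ← cos_lt_cos_iff_mem_Ioo htπ (Set.Ioo_subset_Icc_self hθ), Set.mem_Ioc]
  constructor
  · rintro ⟨hrt, hrθ⟩
    have hθpos : 0 < Real.cos θ := pos_of_mul_pos_right (one_pos.trans hrθ) hr.le
    have hrθ' : (Real.cos θ)⁻¹ < r := by rwa [inv_lt_iff_one_lt_mul₀ hθpos]
    exact ⟨(inv_lt_inv₀ hθpos hcos).mp (hrθ'.trans_le hrt), hrθ', hrt⟩
  · rintro ⟨htθ, hrθ, hrt⟩
    exact ⟨hrt, by rwa [inv_lt_iff_one_lt_mul₀ (hcos.trans htθ)] at hrθ⟩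

lemma setLIntegral_ofReal_Ioc {a b : ℝ} (ha : 0 ≤ a) (hab : a ≤ b) :
    ∫⁻ r in Set.Ioc a b, ENNReal.ofReal r = ENNReal.ofReal ((b ^ 2 - a ^ 2) / 2) := by
  rw [← ofReal_integral_eq_lintegral_ofReal, ← intervalIntegral.integral_of_le hab, integral_id]
  · exact (continuous_id.intervalIntegrable a b).1
  · exact ae_restrict_of_forall_mem measurableSet_Ioc fun r hr ↦ ha.trans hr.1.le

lemma integral_inv_cos_sq {t : ℝ} (ht : t ∈ Set.Ioo 0 (π / 2)) :
    IntervalIntegrable (fun θ ↦ (Real.cos θ)⁻¹ ^ 2) volume (-t) t ∧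
      ∫ θ in (-t)..t, (Real.cos θ)⁻¹ ^ 2 = 2 * Real.tan t := by
  have hcos : ∀ θ ∈ Set.uIcc (-t) t, Real.cos θ ≠ 0 := by
    intro θ hθ
    rw [Set.uIcc_of_le (by linarith [ht.1])] at hθ
    exact (Real.cos_pos_of_mem_Ioo ⟨by linarith [hθ.1, ht.2], by linarith [hθ.2, ht.2]⟩).ne'
  have hint : IntervalIntegrable (fun θ ↦ (Real.cos θ)⁻¹ ^ 2) volume (-t) t :=
    ((Real.continuousOn_cos.inv₀ hcos).pow 2).intervalIntegrable
  refine ⟨hint, ?_⟩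
  rw [intervalIntegral.integral_eq_sub_of_hasDerivAt (f := Real.tan) _ hint, Real.tan_neg]
  · ring
  · intro θ hθ
    simpa only [one_div, inv_pow] using Real.hasDerivAt_tan (hcos θ hθ)

lemma volume_eq_lintegral_polarCoord_symm {s : Set ℂ} (hs : MeasurableSet s) :
    volume s = ∫⁻ θ in Set.Ioo (-π) π, ∫⁻ r in Set.Ioi 0,
      ENNReal.ofReal r • s.indicator 1 (Complex.polarCoord.symm (r, θ)) := by
  have hsymm : Continuous Complex.polarCoord.symm :=
    equivRealProdCLM.symm.continuous.comp continuous_polarCoord_symm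
  have hmeas : Measurable fun p : ℝ × ℝ ↦
      ENNReal.ofReal p.1 • s.indicator (1 : ℂ → ENNReal) (Complex.polarCoord.symm p) :=
    (ENNReal.measurable_ofReal.comp measurable_fst).smul
      ((measurable_const.indicator hs).comp hsymm.measurable)
  rw [← lintegral_indicator_one hs, ← Complex.lintegral_comp_polarCoord_symm, polarCoord_target,
    Measure.volume_eq_prod, setLIntegral_prod_symm _ hmeas.aemeasurable]

lemma volume_ballCap_one_eq_lintegral {t : ℝ} (ht : t ∈ Set.Ioo 0 (π / 2)) :
    volume (ballCap (Real.cos t)⁻¹ (1 : ℂ)) =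
      ∫⁻ θ in Set.Ioo (-t) t, ∫⁻ r in Set.Ioc (Real.cos θ)⁻¹ (Real.cos t)⁻¹, ENNReal.ofReal r := by
  have hsub : Set.Ioo (-t) t ⊆ Set.Ioo (-π) π :=
    Set.Ioo_subset_Ioo (by linarith [ht.2, Real.pi_pos]) (by linarith [ht.2, Real.pi_pos])
  rw [volume_eq_lintegral_polarCoord_symm (ballCap.measurableSet _ _),
    ← Set.inter_eq_self_of_subset_left hsub, ← setLIntegral_indicator measurableSet_Ioo]
  refine setLIntegral_congr_fun measurableSet_Ioo fun θ hθ ↦ ?_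
  have hmem {r : ℝ} (hr : r ∈ Set.Ioi 0) := polarCoord_symm_mem_ballCap_one ht hr hθ
  by_cases hθt : θ ∈ Set.Ioo (-t) t
  · have hcosθ : 0 < Real.cos θ :=
      Real.cos_pos_of_mem_Ioo ⟨by linarith [hθt.1, ht.2], by linarith [hθt.2, ht.2]⟩
    have hIoc : Set.Ioc (Real.cos θ)⁻¹ (Real.cos t)⁻¹ ⊆ Set.Ioi 0 :=
      fun r hr ↦ (inv_pos.mpr hcosθ).trans hr.1
    rw [Set.indicator_of_mem hθt, ← Set.inter_eq_self_of_subset_left hIoc,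
      ← setLIntegral_indicator measurableSet_Ioc]
    refine setLIntegral_congr_fun measurableSet_Ioi fun r hr ↦ ?_
    by_cases hrθ : r ∈ Set.Ioc (Real.cos θ)⁻¹ (Real.cos t)⁻¹
    · rw [Set.indicator_of_mem ((hmem hr).mpr ⟨hθt, hrθ⟩), Set.indicator_of_mem hrθ, Pi.one_apply,
        smul_eq_mul, mul_one]
    · rw [Set.indicator_of_notMem fun h ↦ hrθ ((hmem hr).mp h).2, Set.indicator_of_notMem hrθ,
        smul_zero]
  · rw [Set.indicator_of_notMem hθt]
    refine setLIntegral_eq_zero measurableSet_Ioi fun r hr ↦ ?_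
    rw [Set.indicator_of_notMem fun h ↦ hθt ((hmem hr).mp h).1, smul_zero, Pi.zero_apply]

lemma volume_ballCap_one {t : ℝ} (ht : t ∈ Set.Ioo 0 (π / 2)) :
    volume (ballCap (Real.cos t)⁻¹ (1 : ℂ)) =
      ENNReal.ofReal ((Real.cos t)⁻¹ ^ 2 * t - Real.tan t) := by
  obtain ⟨hint, hintegral⟩ := integral_inv_cos_sq ht
  have hintegrable : IntervalIntegrable
      (fun θ ↦ ((Real.cos t)⁻¹ ^ 2 - (Real.cos θ)⁻¹ ^ 2) / 2) volume (-t) t :=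
    (intervalIntegrable_const.sub hint).div_const 2
  have hcos : ∀ θ ∈ Set.Ioo (-t) t, 0 < Real.cos θ ∧ (Real.cos θ)⁻¹ ≤ (Real.cos t)⁻¹ := by
    intro θ hθ
    have hcost : 0 < Real.cos t :=
      Real.cos_pos_of_mem_Ioo ⟨by linarith [ht.1, Real.pi_pos], ht.2⟩
    have hlt : Real.cos t < Real.cos θ := (cos_lt_cos_iff_mem_Ioo
      ⟨ht.1.le, by linarith [ht.2, Real.pi_pos]⟩
      ⟨by linarith [hθ.1, ht.2, Real.pi_pos], by linarith [hθ.2, ht.2, Real.pi_pos]⟩).mpr hθ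
    exact ⟨hcost.trans hlt, inv_anti₀ hcost hlt.le⟩
  calc volume (ballCap (Real.cos t)⁻¹ (1 : ℂ))
      = ∫⁻ θ in Set.Ioo (-t) t,
          ENNReal.ofReal (((Real.cos t)⁻¹ ^ 2 - (Real.cos θ)⁻¹ ^ 2) / 2) := by
        rw [volume_ballCap_one_eq_lintegral ht]
        exact setLIntegral_congr_fun measurableSet_Ioo fun θ hθ ↦
          setLIntegral_ofReal_Ioc (inv_nonneg.mpr (hcos θ hθ).1.le) (hcos θ hθ).2
    _ = ENNReal.ofReal (∫ θ in (-t)..t, ((Real.cos t)⁻¹ ^ 2 - (Real.cos θ)⁻¹ ^ 2) / 2) := by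
        rw [intervalIntegral.integral_of_le (by linarith [ht.1]), integral_Ioc_eq_integral_Ioo,
          ofReal_integral_eq_lintegral_ofReal]
        · exact hintegrable.1.mono_set Set.Ioo_subset_Ioc_self
        · refine ae_restrict_of_forall_mem measurableSet_Ioo fun θ hθ ↦ ?_
          obtain ⟨hpos, hle⟩ := hcos θ hθ
          exact div_nonneg (sub_nonneg.mpr (pow_le_pow_left₀ (inv_nonneg.mpr hpos.le) hle 2))
            zero_le_two
    _ = ENNReal.ofReal ((Real.cos t)⁻¹ ^ 2 * t - Real.tan t) := by
        rw [intervalIntegral.integral_div, intervalIntegral.integral_sub intervalIntegrable_const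
          hint, intervalIntegral.integral_const, hintegral, smul_eq_mul]
        ring_nf

end CapArea

section RegularPolygon

open Complex Metric
open scoped Real RealInnerProductSpace

lemma inner_exp_ofReal_mul_I (θ φ : ℝ) : ⟪exp (θ * I), exp (φ * I)⟫ = Real.cos (θ - φ) := by
  rw [Complex.inner, ← exp_conj, ← exp_add, map_mul, conj_I, conj_ofReal, mul_neg, ← sub_eq_add_neg,
    ← sub_mul, ← ofReal_sub, exp_ofReal_mul_I_re, ← Real.cos_neg, neg_sub]

lemma norm_exp_add_exp_ofReal_mul_I (θ φ : ℝ) :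
    ‖exp (θ * I) + exp (φ * I)‖ = 2 * |Real.cos ((θ - φ) / 2)| := by
  rw [← sq_eq_sq₀ (norm_nonneg _) (by positivity), norm_add_sq_real, inner_exp_ofReal_mul_I,
    norm_exp_ofReal_mul_I, norm_exp_ofReal_mul_I, mul_pow, sq_abs, Real.cos_sq,
    mul_div_cancel₀ _ two_ne_zero]
  ring

lemma cos_le_cos_of_abs_mem_Icc {t x : ℝ} (ht : 0 ≤ t) (hx : |x| ∈ Set.Icc t (2 * π - t)) :
    Real.cos x ≤ Real.cos t := by
  have hle : |(|x| - π)| ≤ π - t := abs_le.mpr ⟨by linarith [hx.1], by linarith [hx.2]⟩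
  have := Real.cos_le_cos_of_nonneg_of_le_pi (abs_nonneg _) (by linarith) hle
  rwa [Real.cos_pi_sub, Real.cos_abs, Real.cos_sub_pi, neg_le_neg_iff, Real.cos_abs] at this

lemma abs_cos_le_cos_of_abs_mem_Icc {t x : ℝ} (ht : 0 ≤ t) (hx : |x| ∈ Set.Icc t (π - t)) :
    |Real.cos x| ≤ Real.cos t := by
  refine abs_le'.mpr ⟨cos_le_cos_of_abs_mem_Icc ht ⟨hx.1, by linarith [hx.2, Real.pi_pos]⟩, ?_⟩
  rw [← Real.cos_abs x, ← Real.cos_pi_sub]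
  exact Real.cos_le_cos_of_nonneg_of_le_pi ht (by linarith [abs_nonneg x]) (by linarith [hx.2])

lemma exists_eq_norm_smul_exp_ofReal_mul_I (z : ℂ) :
    ∃ θ ∈ Set.Ico 0 (2 * π), z = ‖z‖ • exp ((θ : ℝ) * I) := by
  have hper : Function.Periodic (fun θ : ℝ ↦ exp (θ * I)) (2 * π) := fun θ ↦ by
    push_cast
    exact exp_mul_I_periodic θ
  obtain ⟨θ, hθ, hθz⟩ := hper.exists_mem_Ico₀ Real.two_pi_pos z.arg
  refine ⟨θ, hθ, ?_⟩
  rw [← hθz, real_smul, norm_mul_exp_arg_mul_I]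

/-- The vertices of the regular `n`-gon circumscribed about the unit circle whose sides touch the
circle at the `n`-th roots of unity. -/
noncomputable def regularVertices (n : ℕ) : Finset ℂ :=
  (Finset.range n).image fun k : ℕ ↦ (Real.cos (π / n))⁻¹ • exp (((2 * k + 1) * (π / n) : ℝ) * I)

namespace regularVertices

lemma card_le (n : ℕ) : (regularVertices n).card ≤ n :=
  Finset.card_image_le.trans_eq (Finset.card_range n)

variable {n : ℕ} (hn : 3 ≤ n)

include hn

lemma pi_div_mem_Ioo : π / n ∈ Set.Ioo 0 (π / 2) :=
  ⟨by positivity, by gcongr; exact_mod_cast hn⟩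

lemma cos_pi_div_pos : 0 < Real.cos (π / n) :=
  Real.cos_pos_of_mem_Ioo ⟨by linarith [(pi_div_mem_Ioo hn).1, Real.pi_pos], (pi_div_mem_Ioo hn).2⟩

lemma convexHull_subset_closedBall :
    convexHull ℝ (regularVertices n : Set ℂ) ⊆ closedBall 0 (Real.cos (π / n))⁻¹ := by
  refine convexHull_min (fun v hv ↦ ?_) (convex_closedBall _ _)
  obtain ⟨k, -, rfl⟩ := Finset.mem_image.mp hv
  rw [mem_closedBall_zero_iff, norm_smul, norm_exp_ofReal_mul_I, mul_one,
    Real.norm_of_nonneg (inv_nonneg.mpr (cos_pi_div_pos hn).le)]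

lemma exists_norm_le_inner (f : ℂ) : ∃ v ∈ regularVertices n, ‖f‖ ≤ ⟪f, v⟫ := by
  obtain ⟨θ, hθ, hf⟩ := exists_eq_norm_smul_exp_ofReal_mul_I f
  obtain ⟨ht, htπ⟩ := pi_div_mem_Ioo hn
  have hnt : n * (2 * (π / n)) = 2 * π := by field_simp
  have hk : ⌊θ / (2 * (π / n))⌋₊ < n := by
    rw [Nat.floor_lt (div_nonneg hθ.1 (by positivity)), div_lt_iff₀ (by positivity), hnt]
    exact hθ.2
  have hfloor := Nat.floor_le (div_nonneg hθ.1 (by positivity : 0 ≤ 2 * (π / n)))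
  have hlt := Nat.lt_floor_add_one (θ / (2 * (π / n)))
  rw [le_div_iff₀ (by positivity)] at hfloor
  rw [div_lt_iff₀ (by positivity)] at hlt
  set k := ⌊θ / (2 * (π / n))⌋₊
  have hcos : Real.cos (π / n) ≤ Real.cos (θ - (2 * k + 1) * (π / n)) := by
    rw [← Real.cos_abs (θ - _)]
    exact Real.cos_le_cos_of_nonneg_of_le_pi (abs_nonneg _) (by linarith)
      (abs_le.mpr ⟨by linarith, by linarith⟩)
  refine ⟨_, Finset.mem_image_of_mem _ (Finset.mem_range.mpr hk), ?_⟩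
  calc ‖f‖ ≤ ‖f‖ * ((Real.cos (π / n))⁻¹ * Real.cos (θ - (2 * k + 1) * (π / n))) :=
        le_mul_of_one_le_right (norm_nonneg f) <| by
          rwa [← div_eq_inv_mul, one_le_div (cos_pi_div_pos hn)]
    _ = ⟪f, (Real.cos (π / n))⁻¹ • exp (((2 * k + 1) * (π / n) : ℝ) * I)⟫ := by
        conv_rhs => rw [hf]
        rw [real_inner_smul_left, real_inner_smul_right, inner_exp_ofReal_mul_I]

lemma closedBall_subset_convexHull :
    closedBall 0 1 ⊆ convexHull ℝ (regularVertices n : Set ℂ) := by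
  intro x hx
  by_contra hxV
  obtain ⟨f, u, hfV, hfx⟩ := exists_inner_lt_of_notMem (convex_convexHull ℝ _)
    ((regularVertices n).finite_toSet.isClosed_convexHull ℝ) hxV
  obtain ⟨v, hv, hfv⟩ := exists_norm_le_inner hn f
  have hfx' : ⟪f, x⟫ ≤ ‖f‖ := (real_inner_le_norm f x).trans
    (mul_le_of_le_one_right (norm_nonneg f) (mem_closedBall_zero_iff.mp hx))
  linarith [hfV v (subset_convexHull ℝ _ hv)]

lemma exp_mem_oneSidedPolar {k : ℕ} (hk : k < n) :
    exp ((2 * k * (π / n) : ℝ) * I) ∈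
      oneSidedPolar (convexHull ℝ (regularVertices n : Set ℂ)) := by
  rw [oneSidedPolar.convexHull_finset]
  intro v hv
  obtain ⟨j, hj, rfl⟩ := Finset.mem_image.mp hv
  have ht := (pi_div_mem_Ioo hn).1
  have hnt : n * (π / n) = π := by field_simp
  have hlower : 1 ≤ |(2 * k - (2 * j + 1) : ℝ)| := by
    exact_mod_cast Int.one_le_abs (z := 2 * k - (2 * j + 1)) (by omega)
  have hupper : |(2 * k - (2 * j + 1) : ℝ)| ≤ 2 * n - 1 := by
    have : |(2 * k - (2 * j + 1) : ℤ)| ≤ 2 * n - 1 := by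
      have := Finset.mem_range.mp hj
      exact abs_le.mpr ⟨by omega, by omega⟩
    exact_mod_cast this
  rw [real_inner_smul_right, inner_exp_ofReal_mul_I, ← sub_mul, inv_mul_le_one₀ (cos_pi_div_pos hn)]
  refine cos_le_cos_of_abs_mem_Icc ht.le ?_
  rw [abs_mul, abs_of_pos ht]
  exact ⟨le_mul_of_one_le_left ht.le hlower, by nlinarith⟩

lemma pairwiseDisjoint_ballCap :
    (Finset.range n : Set ℕ).PairwiseDisjoint fun k : ℕ ↦
      ballCap (Real.cos (π / n))⁻¹ (exp ((2 * k * (π / n) : ℝ) * I)) := by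
  intro j hj k hk hjk
  refine ballCap.disjoint ?_
  have ht := (pi_div_mem_Ioo hn).1
  have hnt : n * (π / n) = π := by field_simp
  have hlower : 1 ≤ |(j - k : ℝ)| := by
    exact_mod_cast Int.one_le_abs (z := j - k) (by omega)
  have hupper : |(j - k : ℝ)| ≤ n - 1 := by
    have : |(j - k : ℤ)| ≤ n - 1 := by
      have := Finset.mem_range.mp hj
      have := Finset.mem_range.mp hk
      exact abs_le.mpr ⟨by omega, by omega⟩
    exact_mod_cast this
  have habs : |Real.cos ((j - k) * (π / n))| ≤ Real.cos (π / n) := by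
    refine abs_cos_le_cos_of_abs_mem_Icc ht.le ?_
    rw [abs_mul, abs_of_pos ht]
    exact ⟨le_mul_of_one_le_left ht.le hlower, by nlinarith⟩
  rw [norm_exp_add_exp_ofReal_mul_I, ← div_eq_mul_inv, div_le_iff₀ (cos_pi_div_pos hn)]
  convert mul_le_mul_of_nonneg_left habs zero_le_two using 4
  ring

lemma volume_convexHull_add_card_mul_le :
    volume (convexHull ℝ (regularVertices n : Set ℂ)) +
        n * volume (ballCap (Real.cos (π / n))⁻¹ (1 : ℂ)) ≤
      volume (closedBall (0 : ℂ) (Real.cos (π / n))⁻¹) := by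
  simpa only [Finset.card_range] using
    ballCap.volume_add_card_mul_le (convexHull_subset_closedBall hn)
      (fun k _ ↦ (norm_exp_ofReal_mul_I _).trans norm_one.symm)
      (fun k hk ↦ exp_mem_oneSidedPolar hn (Finset.mem_range.mp hk)) (pairwiseDisjoint_ballCap hn)

end regularVertices

end RegularPolygon

/-- The areas of the polygons with at most `n` vertices that contain `E`, a polygon being the convex
hull of a finite set. -/
def circumscribedPolygonAreas {V : Type*} [AddCommGroup V] [Module ℝ V] [MeasureSpace V] (n : ℕ)
    (E : Set V) : Set ℝ :=
  {A | ∃ S : Finset V, S.card ≤ n ∧ E ⊆ convexHull ℝ (S : Set V) ∧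
    A = (volume (convexHull ℝ (S : Set V))).toReal}

section UnitDisc

open Complex Metric
open scoped Real

lemma volume_closedBall_inv_cos_pi_div {n : ℕ} (hn : 3 ≤ n) :
    volume (closedBall (0 : ℂ) (Real.cos (π / n))⁻¹) =
      ENNReal.ofReal (n * Real.tan (π / n)) +
        n * volume (ballCap (Real.cos (π / n))⁻¹ (1 : ℂ)) := by
  have ht := regularVertices.pi_div_mem_Ioo hn
  have hnt : n * (π / n) = π := by field_simp
  set t := π / n
  have hcos : 0 < Real.cos t := regularVertices.cos_pi_div_pos hn
  have hcap : 0 ≤ (Real.cos t)⁻¹ ^ 2 * t - Real.tan t := by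
    have hsin : Real.sin t * Real.cos t ≤ t :=
      (mul_le_of_le_one_right (Real.sin_nonneg_of_nonneg_of_le_pi ht.1.le
        (by linarith [ht.2, Real.pi_pos])) (Real.cos_le_one t)).trans (Real.sin_le ht.1.le)
    have : (Real.cos t)⁻¹ ^ 2 * t - Real.tan t =
        (Real.cos t)⁻¹ ^ 2 * (t - Real.sin t * Real.cos t) := by
      rw [Real.tan_eq_sin_div_cos]
      field_simp
    rw [this]
    exact mul_nonneg (sq_nonneg _) (sub_nonneg.mpr hsin)
  have htan : 0 ≤ Real.tan t := Real.tan_nonneg_of_nonneg_of_le_pi_div_two ht.1.le ht.2.le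
  rw [Complex.volume_closedBall, volume_ballCap_one ht, ← ENNReal.ofReal_natCast n,
    ← ENNReal.ofReal_mul n.cast_nonneg, ← ENNReal.ofReal_add (by positivity) (by positivity),
    ← ENNReal.ofReal_pow (by positivity), ← ENNReal.ofReal_coe_nnreal,
    ← ENNReal.ofReal_mul (by positivity), NNReal.coe_real_pi, ← hnt]
  ring_nf

lemma isLeast_circumscribedPolygonAreas_closedBall {n : ℕ} (hn : 3 ≤ n) :
    IsLeast (circumscribedPolygonAreas n (closedBall (0 : ℂ) 1)) (n * Real.tan (π / n)) := by
  have := finrank_real_complex_fact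
  have hdisc := volume_closedBall_inv_cos_pi_div hn
  have hcaps : n * volume (ballCap (Real.cos (π / n))⁻¹ (1 : ℂ)) ≠ ⊤ :=
    ne_top_of_le_ne_top measure_closedBall_lt_top.ne (hdisc ▸ self_le_add_left _ _)
  have hlower : ∀ S : Finset ℂ, S.card ≤ n → closedBall 0 1 ⊆ convexHull ℝ (S : Set ℂ) →
      ENNReal.ofReal (n * Real.tan (π / n)) ≤ volume (convexHull ℝ (S : Set ℂ)) := by
    intro S hSn hS
    rw [← ENNReal.add_le_add_iff_right hcaps, ← hdisc]
    exact (volume_closedBall_le_volume_convexHull_add hS _ norm_one).trans (by gcongr)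
  have htan : 0 ≤ n * Real.tan (π / n) := mul_nonneg n.cast_nonneg <|
    Real.tan_nonneg_of_nonneg_of_le_pi_div_two (regularVertices.pi_div_mem_Ioo hn).1.le
      (regularVertices.pi_div_mem_Ioo hn).2.le
  constructor
  · have hupper : volume (convexHull ℝ (regularVertices n : Set ℂ)) ≤
        ENNReal.ofReal (n * Real.tan (π / n)) := by
      rw [← ENNReal.add_le_add_iff_right hcaps, ← hdisc]
      exact regularVertices.volume_convexHull_add_card_mul_le hn
    refine ⟨regularVertices n, regularVertices.card_le n,
      regularVertices.closedBall_subset_convexHull hn, ?_⟩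
    rw [hupper.antisymm (hlower _ (regularVertices.card_le n)
      (regularVertices.closedBall_subset_convexHull hn)), ENNReal.toReal_ofReal htan]
  · rintro _ ⟨S, hSn, hS, rfl⟩
    exact (ENNReal.ofReal_le_iff_le_toReal
      (S.finite_toSet.isCompact_convexHull (𝕜 := ℝ)).measure_lt_top.ne).mp (hlower S hSn hS)

end UnitDisc

lemma circumscribedPolygonAreas_image {V W : Type*} [AddCommGroup V] [Module ℝ V] [MeasureSpace V]
    [AddCommGroup W] [Module ℝ W] [MeasureSpace W] (L : V ≃ₗ[ℝ] W) {c : ℝ}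
    (hL : ∀ s : Set V, volume.real (L '' s) = c * volume.real s) (n : ℕ) (E : Set V) :
    circumscribedPolygonAreas n (L '' E) = (c * ·) '' circumscribedPolygonAreas n E := by
  classical
  have hhull (S : Finset V) :
      convexHull ℝ (S.image L : Set W) = L '' convexHull ℝ (S : Set V) := by
    rw [Finset.coe_image]
    exact (L.toLinearMap.isLinear.image_convexHull _).symm
  have harea (S : Finset V) : (volume (convexHull ℝ (S.image L : Set W))).toReal =
      c * (volume (convexHull ℝ (S : Set V))).toReal := by
    rw [hhull]
    exact hL _
  have hsub (S : Finset V) : L '' E ⊆ convexHull ℝ (S.image L : Set W) ↔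
      E ⊆ convexHull ℝ (S : Set V) := by
    rw [hhull, Set.image_subset_image_iff L.injective]
  ext A
  constructor
  · rintro ⟨T, hTn, hT, rfl⟩
    obtain ⟨S, rfl⟩ : ∃ S : Finset V, T = S.image L :=
      ⟨T.image L.symm, by simp [Finset.image_image, Function.comp_def]⟩
    rw [Finset.card_image_of_injective S L.injective] at hTn
    exact ⟨_, ⟨S, hTn, (hsub S).mp hT, rfl⟩, (harea S).symm⟩
  · rintro ⟨_, ⟨S, hSn, hS, rfl⟩, rfl⟩
    exact ⟨S.image L, Finset.card_image_le.trans hSn, (hsub S).mpr hS, (harea S).symm⟩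

section Ellipse

open Complex Metric
open scoped Real

lemma volume_image_prodMk_mul (a b : ℝ) (s : Set (ℝ × ℝ)) :
    volume ((fun p : ℝ × ℝ ↦ (a * p.1, b * p.2)) '' s) =
      ENNReal.ofReal |a * b| * volume s := by
  set M := Matrix.toLin (Module.Basis.finTwoProd ℝ) (Module.Basis.finTwoProd ℝ) !![a, 0; 0, b]
  have hM : (fun p : ℝ × ℝ ↦ (a * p.1, b * p.2)) = M := by
    ext p <;> simp [M, Matrix.toLin_finTwoProd_apply]
  rw [hM, Measure.addHaar_image_linearMap, LinearMap.det_toLin, Matrix.det_fin_two_of, mul_zero,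
    sub_zero]

variable {a b : ℝ} (ha : a ≠ 0) (hb : b ≠ 0)

/-- The linear map that carries the closed unit disc to the ellipse with semi-axes `|a|` and
`|b|`. -/
noncomputable def ellipseEquiv : ℂ ≃ₗ[ℝ] ℝ × ℝ :=
  equivRealProdLm.trans
    ((LinearEquiv.smulOfNeZero ℝ ℝ a ha).prodCongr (LinearEquiv.smulOfNeZero ℝ ℝ b hb))

lemma ellipseEquiv_apply (z : ℂ) : ellipseEquiv ha hb z = (a * z.re, b * z.im) := rfl

lemma volumeReal_image_ellipseEquiv (s : Set ℂ) :
    volume.real (ellipseEquiv ha hb '' s) = |a * b| * volume.real s := by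
  have himage : ellipseEquiv ha hb '' s =
      (fun p : ℝ × ℝ ↦ (a * p.1, b * p.2)) '' (measurableEquivRealProd '' s) := by
    rw [Set.image_image]
    rfl
  rw [measureReal_def, himage, volume_image_prodMk_mul, MeasurableEquiv.image_eq_preimage_symm,
    volume_preserving_equiv_real_prod.symm.measure_preimage_equiv, ENNReal.toReal_mul,
    ENNReal.toReal_ofReal (abs_nonneg _), measureReal_def]

lemma ellipseEquiv_image_closedBall :
    ellipseEquiv ha hb '' closedBall 0 1 = {p : ℝ × ℝ | p.1 ^ 2 / a ^ 2 + p.2 ^ 2 / b ^ 2 ≤ 1} := by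
  ext p
  obtain ⟨z, rfl⟩ := (ellipseEquiv ha hb).surjective p
  rw [(ellipseEquiv ha hb).injective.mem_set_image, mem_closedBall_zero_iff, ellipseEquiv_apply,
    Set.mem_ofPred_eq, mul_pow, mul_pow, mul_div_cancel_left₀ _ (pow_ne_zero 2 ha),
    mul_div_cancel_left₀ _ (pow_ne_zero 2 hb), ← sq_le_one_iff₀ (norm_nonneg z), Complex.sq_norm,
    normSq_apply, sq, sq]

include ha hb

lemma volumeReal_ellipse :
    volume.real {p : ℝ × ℝ | p.1 ^ 2 / a ^ 2 + p.2 ^ 2 / b ^ 2 ≤ 1} = π * |a * b| := by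
  rw [← ellipseEquiv_image_closedBall ha hb, volumeReal_image_ellipseEquiv, measureReal_def,
    Complex.volume_closedBall, ENNReal.ofReal_one, one_pow, one_mul, ENNReal.coe_toReal,
    NNReal.coe_real_pi, mul_comm]

lemma isLeast_circumscribedPolygonAreas_ellipse {n : ℕ} (hn : 3 ≤ n) :
    IsLeast (circumscribedPolygonAreas n {p : ℝ × ℝ | p.1 ^ 2 / a ^ 2 + p.2 ^ 2 / b ^ 2 ≤ 1})
      (n * |a * b| * Real.tan (π / n)) := by
  rw [← ellipseEquiv_image_closedBall ha hb,
    circumscribedPolygonAreas_image _ (volumeReal_image_ellipseEquiv ha hb), mul_right_comm,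
    mul_comm _ |a * b|]
  exact (monotone_mul_left_of_nonneg (abs_nonneg (a * b))).map_isLeast
    (isLeast_circumscribedPolygonAreas_closedBall hn)

end Ellipse

theorem stmt_18 (a b : ℝ) (ha : 0 < a) (hb : 0 < b)
    (E : Set (ℝ × ℝ)) (hE : E = {p : ℝ × ℝ | p.1 ^ 2 / a ^ 2 + p.2 ^ 2 / b ^ 2 ≤ 1})
    (n : ℕ) (hn : 3 ≤ n) :
    sInf { A : ℝ | ∃ S : Finset (ℝ × ℝ), S.card ≤ n ∧
        E ⊆ convexHull ℝ (S : Set (ℝ × ℝ)) ∧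
        A = (volume (convexHull ℝ (S : Set (ℝ × ℝ)))).toReal } =
      (n : ℝ) * a * b * Real.tan (Real.pi / n) ∧
    sInf { A : ℝ | ∃ S : Finset (ℝ × ℝ), S.card ≤ n ∧
        E ⊆ convexHull ℝ (S : Set (ℝ × ℝ)) ∧
        A = (volume (convexHull ℝ (S : Set (ℝ × ℝ)))).toReal } -
      (volume E).toReal =
      (n : ℝ) * a * b * Real.tan (Real.pi / n) - Real.pi * a * b := by
  have hmin : sInf (circumscribedPolygonAreas n E) = n * a * b * Real.tan (Real.pi / n) := by
    rw [hE, (isLeast_circumscribedPolygonAreas_ellipse ha.ne' hb.ne' hn).csInf_eq,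
      abs_of_pos (mul_pos ha hb), mul_assoc (n : ℝ) a b]
  have harea : (volume E).toReal = Real.pi * a * b := by
    rw [hE, ← measureReal_def, volumeReal_ellipse ha.ne' hb.ne', abs_of_pos (mul_pos ha hb),
      mul_assoc Real.pi a b]
  exact ⟨hmin, congrArg₂ (· - ·) hmin harea⟩
end
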